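/- Let G be a connected nonbipartite unicyclic graph of order n whose unique cycle C has odd length k with k < n, and let X be an eigenvector of the signless Laplacian Q(G) corresponding to the least eigenvalue q_min(G). Then there exists a vertex u on the cycle C with degree at least 3 in G such that X(u) ≠ 0. -/

import Mathlib

open scoped Classical

/-- The signless Laplacian matrix `Q(G) = D(G) + A(G)` of a finite simple graph. -/
noncomputable def signlessLaplacian {V : Type*} [Fintype V] (G : SimpleGraph V) :
    Matrix V V ℝ :=
  fun i j => (if i = j then (G.degree i : ℝ) else 0) + (if G.Adj i j then 1 else 0)

/-- The least eigenvalue of the signless Laplacian of `G`. -/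
noncomputable def qmin {V : Type*} [Fintype V] (G : SimpleGraph V) : ℝ :=
  sInf {μ : ℝ | ∃ x : V → ℝ, x ≠ 0 ∧ (signlessLaplacian G).mulVec x = μ • x}

/-! The signless Laplacian `Q` of `G` has quadratic form `∑ (x a + x b) ^ 2` over the edges
`s(a, b)`, and `qmin G` is the minimum of its Rayleigh quotient, attained exactly at the
eigenvectors. Suppose the eigenvector `X` vanishes at every vertex of the cycle `C` where a tree is
attached.

Then `X` vanishes on all of `C`. Indeed, erasing `X` on `C` only removes the energy carried by `C`,
so that energy is at most `qmin G` times the square norm of `X` on `C`. If `X` were nonzero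
somewhere on `C`, rotate its restriction to `C` so that a nonzero value sits at an attachment
vertex and continue it into the trees with alternating signs. The continuation costs no energy but
strictly increases the norm, which violates the Rayleigh inequality because `qmin G > 0`.

Now delete an edge of `C`: what remains is a tree, with signs `ε` alternating along its edges. As
`X = 0` on `C`, the vector `ε * |X|` has no more energy than `X` on any edge, so it is again an
eigenvector. At a zero of it the eigenvalue equation is a vanishing sum of terms of a single sign,
so all neighbours are zeros too, and connectedness forces `X = 0`. -/

open Matrix Set SimpleGraph

lemma mem_spectrum_iff_exists_mulVec_eq_smul {n K : Type*} [Field K] [Fintype n]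
    (A : Matrix n n K) (μ : K) :
    μ ∈ spectrum K A ↔ ∃ x : n → K, x ≠ 0 ∧ A *ᵥ x = μ • x := by
  rw [← spectrum_toLin', ← Module.End.hasEigenvalue_iff_mem_spectrum]
  constructor
  · intro h
    obtain ⟨x, hx⟩ := h.exists_hasEigenvector
    exact ⟨x, hx.2, by simpa using hx.apply_eq_smul⟩
  · rintro ⟨x, hx, h⟩
    exact Module.End.hasEigenvalue_of_hasEigenvector
      ⟨Module.End.mem_eigenspace_iff.2 (by simpa using h), hx⟩

section EdgeSum

variable {V : Type*}

/-- The sum `x a + x b` of a vertex weighting `x` over the two ends of an unordered pair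
`s(a, b)`. -/
def edgeSum {R : Type*} [AddCommMonoid R] (x : V → R) : Sym2 V → R :=
  Sym2.lift ⟨fun a b => x a + x b, fun _ _ => add_comm _ _⟩

@[simp]
lemma edgeSum_mk {R : Type*} [AddCommMonoid R] (x : V → R) (a b : V) :
    edgeSum x s(a, b) = x a + x b :=
  rfl

lemma edgeSum_comp {W R : Type*} [AddCommMonoid R] (x : W → R) (f : V → W) (e : Sym2 V) :
    edgeSum (x ∘ f) e = edgeSum x (e.map f) := by
  induction e with | _ a b => rfl

variable [Fintype V]

/-- The signless Dirichlet energy `∑ (x a + x b) ^ 2` of a vertex weighting `x` over the edges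
`s(a, b)` in `S`. For `S` the edge set of `G` it is the quadratic form of `signlessLaplacian G`. -/
noncomputable def signlessEnergy (S : Set (Sym2 V)) (x : V → ℝ) : ℝ :=
  ∑ e ∈ S.toFinset, edgeSum x e ^ 2

lemma signlessEnergy_congr {S : Set (Sym2 V)} {x y : V → ℝ}
    (h : ∀ e ∈ S, edgeSum x e ^ 2 = edgeSum y e ^ 2) : signlessEnergy S x = signlessEnergy S y :=
  Finset.sum_congr rfl fun e he => h e (mem_toFinset.1 he)

lemma signlessEnergy_eq_zero_iff {S : Set (Sym2 V)} {x : V → ℝ} :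
    signlessEnergy S x = 0 ↔ ∀ e ∈ S, edgeSum x e = 0 := by
  simp [signlessEnergy, Finset.sum_eq_zero_iff_of_nonneg, sq_nonneg]

lemma signlessEnergy_add_signlessEnergy_sdiff {S T : Set (Sym2 V)} (h : S ⊆ T) (x : V → ℝ) :
    signlessEnergy S x + signlessEnergy (T \ S) x = signlessEnergy T x := by
  rw [signlessEnergy, signlessEnergy, signlessEnergy, toFinset_sdiff, add_comm]
  exact Finset.sum_sdiff (toFinset_subset_toFinset.2 h)

end EdgeSum

section Rayleigh

variable {V : Type*} [Fintype V] (G : SimpleGraph V)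

lemma signlessLaplacian_eq_incMatrix_mul_transpose :
    signlessLaplacian G = G.incMatrix ℝ * (G.incMatrix ℝ)ᵀ := by
  rw [incMatrix_mul_transpose]
  ext i j
  obtain rfl | h := eq_or_ne i j <;> simp [signlessLaplacian, *]

lemma signlessLaplacian_mulVec_apply (x : V → ℝ) (v : V) :
    (signlessLaplacian G *ᵥ x) v = ∑ w ∈ G.neighborFinset v, (x v + x w) := by
  have hQ : signlessLaplacian G = G.degMatrix ℝ + G.adjMatrix ℝ := by
    ext i j
    simp [signlessLaplacian, degMatrix, diagonal_apply]
  simp [hQ, add_mulVec, degMatrix_mulVec_apply, Finset.sum_add_distrib]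

lemma transpose_incMatrix_mulVec_apply {R : Type*} [CommSemiring R] (x : V → R) (e : Sym2 V) :
    ((G.incMatrix R)ᵀ *ᵥ x) e = if e ∈ G.edgeSet then edgeSum x e else 0 := by
  induction e with | _ a b =>
  split_ifs with h
  · have hab : a ≠ b := G.ne_of_adj h
    have hpair : ({a, b} : Finset V) = Finset.univ.filter fun c => c = a ∨ c = b := by
      ext; simp
    rw [edgeSum_mk, ← Finset.sum_pair hab, hpair, Finset.sum_filter]
    simp [mulVec, dotProduct, incMatrix_apply', mk'_mem_incidenceSet_iff, G.mem_edgeSet.1 h]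
  · simp_all [mulVec, dotProduct, incMatrix_apply', mk'_mem_incidenceSet_iff]

lemma dotProduct_signlessLaplacian_mulVec (x : V → ℝ) :
    x ⬝ᵥ signlessLaplacian G *ᵥ x = signlessEnergy G.edgeSet x := by
  rw [signlessLaplacian_eq_incMatrix_mul_transpose, ← mulVec_mulVec, dotProduct_mulVec,
    ← mulVec_transpose]
  simp only [dotProduct, transpose_incMatrix_mulVec_apply, signlessEnergy, ← sq, ite_pow,
    zero_pow two_ne_zero, ← Finset.sum_filter, filter_mem_univ_eq_toFinset]
  congr!

lemma qmin_eq_sInf_spectrum :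
    qmin G = sInf (spectrum ℝ (signlessLaplacian G)) := by
  simp only [qmin, ← mem_spectrum_iff_exists_mulVec_eq_smul, ofPred_mem_eq]

open scoped MatrixOrder in
lemma posSemidef_signlessLaplacian_sub_qmin :
    (signlessLaplacian G - algebraMap ℝ (Matrix V V ℝ) (qmin G)).PosSemidef := by
  have hQ : (signlessLaplacian G).IsHermitian := by
    rw [signlessLaplacian_eq_incMatrix_mul_transpose, ← conjTranspose_eq_transpose_of_trivial]
    exact isHermitian_mul_conjTranspose_self _
  refine Matrix.le_iff.1 (algebraMap_le_of_le_spectrum (fun μ hμ => ?_) hQ.isSelfAdjoint)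
  rw [qmin_eq_sInf_spectrum]
  exact csInf_le (finite_spectrum _).bddBelow hμ

lemma dotProduct_signlessLaplacian_sub_qmin_mulVec (x : V → ℝ) :
    x ⬝ᵥ (signlessLaplacian G - algebraMap ℝ (Matrix V V ℝ) (qmin G)) *ᵥ x =
      signlessEnergy G.edgeSet x - qmin G * ∑ v, x v ^ 2 := by
  rw [sub_mulVec, dotProduct_sub, dotProduct_signlessLaplacian_mulVec]
  simp [Algebra.algebraMap_eq_smul_one, smul_mulVec, dotProduct, sq, Finset.mul_sum, mul_left_comm]

lemma qmin_mul_sum_sq_le_signlessEnergy (x : V → ℝ) :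
    qmin G * ∑ v, x v ^ 2 ≤ signlessEnergy G.edgeSet x := by
  have h := (posSemidef_signlessLaplacian_sub_qmin G).dotProduct_mulVec_nonneg x
  rw [star_trivial, dotProduct_signlessLaplacian_sub_qmin_mulVec] at h
  exact sub_nonneg.1 h

variable {G} in
lemma signlessLaplacian_mulVec_eq_qmin_smul_iff {x : V → ℝ} :
    signlessLaplacian G *ᵥ x = qmin G • x ↔
      signlessEnergy G.edgeSet x = qmin G * ∑ v, x v ^ 2 := by
  rw [← sub_eq_zero (b := qmin G * _), ← dotProduct_signlessLaplacian_sub_qmin_mulVec]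
  have h := (posSemidef_signlessLaplacian_sub_qmin G).dotProduct_mulVec_zero_iff x
  rw [star_trivial] at h
  rw [h, sub_mulVec, sub_eq_zero, Algebra.algebraMap_eq_smul_one, smul_mulVec, one_mulVec]

end Rayleigh

section Extension

variable {V : Type*}

lemma reachable_induction {G : SimpleGraph V} {P : V → Prop}
    (hstep : ∀ a b, G.Adj a b → P a → P b) {u v : V} (h : G.Reachable u v) (hu : P u) : P v := by
  obtain ⟨p⟩ := h
  induction p with
  | nil => exact hu
  | cons hadj _ ih => exact ih (hstep _ _ hadj hu)

lemma exists_mem_verts_reachable_deleteEdges {G : SimpleGraph V} (hconn : G.Connected)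
    {H : G.Subgraph} (hH : H.verts.Nonempty) (v : V) :
    ∃ s ∈ H.verts, (G.deleteEdges H.edgeSet).Reachable s v := by
  obtain ⟨u, hu⟩ := hH
  refine reachable_induction (P := fun v => ∃ s ∈ H.verts, (G.deleteEdges H.edgeSet).Reachable s v)
    (fun a b hab hreach => ?_) (hconn u v) ⟨u, hu, .rfl⟩
  obtain ⟨s, hs, hsa⟩ := hreach
  by_cases hHab : H.Adj a b
  · exact ⟨b, hHab.snd_mem, .rfl⟩
  · exact ⟨s, hs, hsa.trans (Adj.reachable (by simpa using ⟨hab, hHab⟩))⟩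

lemma exists_adj_mem_notMem {G : SimpleGraph V} (hconn : G.Connected) {S : Set V}
    (hne : S.Nonempty) (huniv : S ≠ univ) : ∃ u ∈ S, ∃ z ∉ S, G.Adj u z := by
  obtain ⟨u, hu⟩ := hne
  obtain ⟨z, hz⟩ := (ne_univ_iff_exists_notMem S).1 huniv
  obtain ⟨p⟩ := hconn u z
  obtain ⟨d, -, hfst, hsnd⟩ := p.exists_boundary_dart S hu hz
  exact ⟨_, hfst, _, hsnd, d.adj⟩

/-- The pair of restrictions of a vertex weighting: to the sums over the edges of `F`, and to the
values on `S`. -/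
def edgeSumProdRestrict (K : Type*) [Field K] (F : SimpleGraph V) (S : Set V) :
    (V → K) →ₗ[K] (F.edgeSet → K) × (S → K) where
  toFun x := (fun e => edgeSum x e, fun s => x s)
  map_add' x y := by
    ext ⟨e, _⟩
    · induction e with | _ a b => exact add_add_add_comm _ _ _ _
    · rfl
  map_smul' r x := by
    ext ⟨e, _⟩
    · induction e with | _ a b => exact (mul_add _ _ _).symm
    · rfl

/- Rooted at `S`, the count makes `F` a spanning forest; dimensions then match in
`x ↦ (edge sums of x, x restricted to S)`, so its injectivity gives surjectivity. -/
lemma exists_extension_edgeSum_eq_zero [Fintype V] {K : Type*} [Field K] {F : SimpleGraph V}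
    {S : Set V} (hreach : ∀ v, ∃ s ∈ S, F.Reachable s v)
    (hcard : F.edgeSet.ncard + S.ncard = Fintype.card V) (g : V → K) :
    ∃ W : V → K, EqOn W g S ∧ ∀ e ∈ F.edgeSet, edgeSum W e = 0 := by
  let L := edgeSumProdRestrict K F S
  have hinj : Function.Injective L := by
    refine (injective_iff_map_eq_zero L).2 fun x hx => funext fun v => ?_
    have hedge : ∀ a b, F.Adj a b → x a + x b = 0 := fun a b hab =>
      congrFun (congrArg Prod.fst hx) ⟨s(a, b), hab⟩
    obtain ⟨s, hs, hsv⟩ := hreach v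
    have hxs : x s = 0 := congrFun (congrArg Prod.snd hx) ⟨s, hs⟩
    refine reachable_induction (P := fun v => x v = 0) (fun a b hab ha => ?_) hsv hxs
    simpa [ha] using hedge a b hab
  have hsurj : Function.Surjective L := by
    refine (LinearMap.injective_iff_surjective_of_finrank_eq_finrank ?_).1 hinj
    simp [← hcard, ncard_eq_toFinset_card']
  obtain ⟨W, hW⟩ := hsurj (0, fun s => g s)
  exact ⟨W, fun s hs => congrFun (congrArg Prod.snd hW) ⟨s, hs⟩,
    fun e he => congrFun (congrArg Prod.fst hW) ⟨e, he⟩⟩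

end Extension

section Cycle

variable {V : Type*} {G : SimpleGraph V} {v : V} {c : G.Walk v v}

lemma formPerm_dropLast_support_getVert (hc : c.IsCycle) {i : ℕ} (hi : i < c.length) :
    c.support.dropLast.formPerm (c.getVert i) = c.getVert (i + 1) := by
  have hlen : c.support.dropLast.length = c.length := by simp
  have hget : ∀ j (hj : j < c.support.dropLast.length),
      c.support.dropLast[j] = c.getVert j := fun j hj => by
    simp [c.getVert_eq_support_getElem (hlen ▸ hj).le]
  rw [← hget i (by lia), List.formPerm_apply_getElem _ hc.nodup_dropLast_support, hget, hlen]
  obtain hlt | heq := (Nat.succ_le_of_lt hi).lt_or_eq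
  · rw [Nat.mod_eq_of_lt hlt]
  · rw [show i + 1 = c.length from heq, Nat.mod_self, c.getVert_zero, c.getVert_length]

lemma mem_dropLast_support_iff (hc : ¬ c.Nil) {x : V} :
    x ∈ c.support.dropLast ↔ x ∈ c.support := by
  rw [← c.tail_support_perm_dropLast_support.mem_iff, c.mem_support_iff]
  exact ⟨.inr, fun h => h.elim (fun hx => hx ▸ c.end_mem_tail_support hc) id⟩

lemma toSubgraph_adj_iff_formPerm (hc : c.IsCycle) {x y : V} :
    c.toSubgraph.Adj x y ↔ x ∈ c.support ∧ c.support.dropLast.formPerm x = y ∨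
      y ∈ c.support ∧ c.support.dropLast.formPerm y = x := by
  have hnext : ∀ x y, x ∈ c.support ∧ c.support.dropLast.formPerm x = y ↔
      ∃ i < c.length, c.getVert i = x ∧ c.getVert (i + 1) = y := by
    intro x y
    constructor
    · rintro ⟨hx, rfl⟩
      rw [← mem_dropLast_support_iff hc.not_nil, List.mem_iff_getElem] at hx
      obtain ⟨i, hi, rfl⟩ := hx
      have hi' : i < c.length := by simpa using hi
      refine ⟨i, hi', by simp [c.getVert_eq_support_getElem hi'.le], ?_⟩
      rw [← formPerm_dropLast_support_getVert hc hi']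
      simp [c.getVert_eq_support_getElem hi'.le]
    · rintro ⟨i, hi, rfl, rfl⟩
      exact ⟨c.getVert_mem_support i, formPerm_dropLast_support_getVert hc hi⟩
  rw [hnext, hnext, c.toSubgraph_adj_iff, ← exists_or]
  simp only [Sym2.eq_iff]
  grind

lemma exists_perm_apply_eq_and_mapsTo_toSubgraph (hc : c.IsCycle) {a b : V} (ha : a ∈ c.support)
    (hb : b ∈ c.support) : ∃ σ : Equiv.Perm V, σ a = b ∧
      MapsTo σ c.toSubgraph.verts c.toSubgraph.verts ∧
      ∀ x y, c.toSubgraph.Adj x y → c.toSubgraph.Adj (σ x) (σ y) := by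
  set r := c.support.dropLast.formPerm with hr
  have hverts : {x | x ∈ c.support.dropLast} = c.toSubgraph.verts := by
    ext
    simp [mem_dropLast_support_iff hc.not_nil]
  have hcycle : r.IsCycleOn c.toSubgraph.verts :=
    hverts ▸ hc.nodup_dropLast_support.isCycleOn_formPerm
  have hmaps : MapsTo r c.toSubgraph.verts c.toSubgraph.verts := hcycle.1.mapsTo
  have hrot : ∀ x y, c.toSubgraph.Adj x y → c.toSubgraph.Adj (r x) (r y) := by
    simp only [toSubgraph_adj_iff_formPerm hc, ← hr, ← c.mem_verts_toSubgraph]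
    rintro x y (⟨hx, rfl⟩ | ⟨hy, rfl⟩)
    · exact .inl ⟨hmaps hx, rfl⟩
    · exact .inr ⟨hmaps hy, rfl⟩
  obtain ⟨n, hn⟩ := hcycle.exists_pow_eq' (hverts ▸ List.finite_toSet _)
    (c.mem_verts_toSubgraph.2 ha) (c.mem_verts_toSubgraph.2 hb)
  refine ⟨r ^ n, hn, r.iterate_eq_pow n ▸ hmaps.iterate n, fun x y hxy => ?_⟩
  clear hn
  induction n with
  | zero => exact hxy
  | succ n ih => simpa only [pow_succ', Equiv.Perm.mul_apply] using hrot _ _ ih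

lemma ncard_verts_toSubgraph (hc : c.IsCycle) : c.toSubgraph.verts.ncard = c.length := by
  have hverts : c.toSubgraph.verts = (c.support.dropLast.toFinset : Set V) := by
    ext
    simp [mem_dropLast_support_iff hc.not_nil]
  rw [hverts, ncard_coe_finset, List.toFinset_card_of_nodup hc.nodup_dropLast_support]
  simp

lemma ncard_edgeSet_toSubgraph {u w : V} {p : G.Walk u w} (hp : p.IsTrail) :
    p.toSubgraph.edgeSet.ncard = p.length := by
  rw [← p.length_edges, ← List.toFinset_card_of_nodup hp.edges_nodup, ← ncard_coe_finset]
  congr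
  ext
  simp [Walk.edgeSet_toSubgraph]

lemma three_le_degree_of_not_adj_toSubgraph [Fintype V] (hc : c.IsCycle) {u z : V}
    (hu : u ∈ c.support) (huz : G.Adj u z) (hz : ¬ c.toSubgraph.Adj u z) : 3 ≤ G.degree u := by
  have hnbr : insert z (c.toSubgraph.neighborSet u) ⊆ G.neighborSet u :=
    insert_subset huz (c.toSubgraph.neighborSet_subset u)
  have hcard := ncard_le_ncard hnbr
  rw [ncard_insert_of_notMem (show z ∉ c.toSubgraph.neighborSet u from hz),
    hc.ncard_neighborSet_toSubgraph_eq_two hu] at hcard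
  rwa [← card_neighborSet_eq_degree, ← Nat.card_eq_fintype_card]

lemma isTree_deleteEdges_of_mem_edges [Finite V] (hconn : G.Connected)
    (huni : G.edgeSet.ncard = Nat.card V) (hc : c.IsCycle) {e : Sym2 V} (he : e ∈ c.edges) :
    (G.deleteEdges {e}).IsTree := by
  induction e with | _ a b =>
  refine isTree_iff_connected_and_card.2 ⟨hconn.connected_delete_edge_of_not_isBridge
    fun hbridge => hbridge.notMem_edges_of_isCycle hc he, ?_⟩
  rw [edgeSet_deleteEdges, Nat.card_coe_set_eq,
    ncard_sdiff_singleton_add_one (c.edges_subset_edgeSet he), huni]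

end Cycle

section Subgraph

lemma sum_comp_eq_of_mapsTo {α M : Type*} [AddCommMonoid M] {s : Finset α} {τ : α → α}
    (hτ : MapsTo τ s s) (hinj : InjOn τ s) (f : α → M) : ∑ a ∈ s, f (τ a) = ∑ a ∈ s, f a :=
  Finset.sum_nbij τ hτ hinj (Finset.surjOn_of_injOn_of_card_le τ hτ hinj le_rfl) fun _ _ => rfl

variable {V : Type*} [Fintype V] {G : SimpleGraph V} {H : G.Subgraph}

lemma signlessEnergy_comp_of_mapsTo {S : Set (Sym2 V)} {τ : V → V} (hτ : Function.Injective τ)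
    (hS : MapsTo (Sym2.map τ) S S) (x : V → ℝ) :
    signlessEnergy S (x ∘ τ) = signlessEnergy S x := by
  simp only [signlessEnergy, edgeSum_comp]
  exact sum_comp_eq_of_mapsTo (by simpa using hS) (Sym2.map.injective hτ).injOn
    fun e => edgeSum x e ^ 2

lemma signlessEnergy_edgeSet_le_qmin_mul_sum_sq {x : V → ℝ}
    (hx : signlessLaplacian G *ᵥ x = qmin G • x)
    (hzero : ∀ u ∈ H.verts, ∀ z, G.Adj u z → ¬ H.Adj u z → x u = 0) :
    signlessEnergy H.edgeSet x ≤ qmin G * ∑ v ∈ H.verts.toFinset, x v ^ 2 := by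
  let w : V → ℝ := H.vertsᶜ.indicator x
  have hin : signlessEnergy H.edgeSet w = 0 := by
    refine signlessEnergy_eq_zero_iff.2 fun e he => ?_
    induction e with | _ a b =>
    have hab : H.Adj a b := he
    simp [w, hab.fst_mem, hab.snd_mem]
  have hout : signlessEnergy (G.edgeSet \ H.edgeSet) w =
      signlessEnergy (G.edgeSet \ H.edgeSet) x := by
    refine signlessEnergy_congr fun e he => ?_
    induction e with | _ a b =>
    obtain ⟨hG, hH⟩ : G.Adj a b ∧ ¬ H.Adj a b := he
    have hwa : w a = x a := by
      simpa [w, indicator_apply_eq_self] using fun ha => hzero a ha b hG hH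
    have hwb : w b = x b := by
      simpa [w, indicator_apply_eq_self] using fun hb => hzero b hb a hG.symm fun h => hH h.symm
    simp [hwa, hwb]
  have hnorm : ∑ v ∈ H.verts.toFinset, x v ^ 2 + ∑ v, w v ^ 2 = ∑ v, x v ^ 2 := by
    rw [← Finset.sum_add_sum_compl H.verts.toFinset fun v => x v ^ 2, add_right_inj]
    simp only [w, indicator_apply, ite_pow, zero_pow two_ne_zero, ← Finset.sum_filter]
    congr 1
    ext
    simp
  have hray := qmin_mul_sum_sq_le_signlessEnergy G w
  have heig := signlessLaplacian_mulVec_eq_qmin_smul_iff.1 hx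
  rw [← signlessEnergy_add_signlessEnergy_sdiff H.edgeSet_subset] at hray heig
  rw [hin, hout] at hray
  rw [← hnorm] at heig
  linarith

lemma apply_eq_zero_of_signlessEnergy_edgeSet_le (hq : 0 < qmin G)
    (hreach : ∀ v, ∃ s ∈ H.verts, (G.deleteEdges H.edgeSet).Reachable s v)
    (hcard : (G.deleteEdges H.edgeSet).edgeSet.ncard + H.verts.ncard = Fintype.card V)
    {g : V → ℝ} (hg : signlessEnergy H.edgeSet g ≤ qmin G * ∑ v ∈ H.verts.toFinset, g v ^ 2)
    {u z : V} (hu : u ∈ H.verts) (hz : z ∉ H.verts) (huz : G.Adj u z) : g u = 0 := by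
  obtain ⟨W, hWg, hW⟩ := exists_extension_edgeSum_eq_zero hreach hcard g
  have hin : signlessEnergy H.edgeSet W = signlessEnergy H.edgeSet g := by
    refine signlessEnergy_congr fun e he => ?_
    induction e with | _ a b =>
    have hab : H.Adj a b := he
    simp [hWg hab.fst_mem, hWg hab.snd_mem]
  have hout : signlessEnergy (G.edgeSet \ H.edgeSet) W = 0 :=
    signlessEnergy_eq_zero_iff.2 fun e he => hW e (by rwa [edgeSet_deleteEdges])
  have hnorm : ∑ v ∈ H.verts.toFinset, g v ^ 2 + ∑ v ∈ H.verts.toFinsetᶜ, W v ^ 2 =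
      ∑ v, W v ^ 2 := by
    rw [← Finset.sum_add_sum_compl H.verts.toFinset, add_left_inj]
    exact Finset.sum_congr rfl fun v hv => by rw [hWg (mem_toFinset.1 hv)]
  have hray := qmin_mul_sum_sq_le_signlessEnergy G W
  rw [← signlessEnergy_add_signlessEnergy_sdiff H.edgeSet_subset, hin, hout, ← hnorm] at hray
  have hrest : ∑ v ∈ H.verts.toFinsetᶜ, W v ^ 2 ≤ 0 := by
    refine nonpos_of_mul_nonpos_right ?_ hq
    linarith
  have hWz : W z = 0 := by
    refine sq_eq_zero_iff.1 ((sq_nonneg _).antisymm' (le_trans ?_ hrest))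
    exact Finset.single_le_sum (f := fun v => W v ^ 2) (fun v _ => sq_nonneg _) (by simpa using hz)
  have huzW : W u + W z = 0 :=
    hW s(u, z) (deleteEdges_adj.2 ⟨huz, fun h => hz (show H.Adj u z from h).snd_mem⟩)
  rwa [hWz, add_zero, hWg hu] at huzW

end Subgraph

section Sign

variable {V : Type*} {G : SimpleGraph V}

lemma exists_abs_eq_one_of_isBipartite (hG : G.IsBipartite) :
    ∃ ε : V → ℝ, (∀ v, |ε v| = 1) ∧ ∀ a b, G.Adj a b → ε b = -ε a := by
  obtain ⟨C⟩ := hG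
  refine ⟨fun v => if C v = 0 then 1 else -1, fun v => ?_, fun a b hab => ?_⟩
  · dsimp only
    split_ifs <;> simp
  · have hne : C a ≠ C b := C.valid hab
    grind

variable [Fintype V] {X ε : V → ℝ}

lemma qmin_pos_of_apply_eq_zero (hconn : G.Connected) (hX : X ≠ 0)
    (heig : signlessLaplacian G *ᵥ X = qmin G • X) {u : V} (hu : X u = 0) : 0 < qmin G := by
  by_contra! hq
  have hnonpos : signlessEnergy G.edgeSet X ≤ 0 := by
    rw [signlessLaplacian_mulVec_eq_qmin_smul_iff.1 heig]
    exact mul_nonpos_of_nonpos_of_nonneg hq (Finset.sum_nonneg fun v _ => sq_nonneg _)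
  have hedge := signlessEnergy_eq_zero_iff.1
    (hnonpos.antisymm (Finset.sum_nonneg fun e _ => sq_nonneg _))
  refine hX (funext fun v => reachable_induction (P := fun v => X v = 0) (fun a b hab ha => ?_)
    (hconn u v) hu)
  simpa [ha] using hedge s(a, b) hab

lemma signlessLaplacian_mulVec_mul_abs_eq (heig : signlessLaplacian G *ᵥ X = qmin G • X)
    (hε : ∀ v, |ε v| = 1) (hsign : ∀ a b, G.Adj a b → ε b = -ε a ∨ X a = 0) :
    signlessLaplacian G *ᵥ (fun v => ε v * |X v|) = qmin G • fun v => ε v * |X v| := by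
  have hsq : ∀ v, ε v ^ 2 = 1 := fun v => by rw [← sq_abs, hε, one_pow]
  have hnorm : ∑ v, (ε v * |X v|) ^ 2 = ∑ v, X v ^ 2 := by simp [mul_pow, hsq]
  rw [signlessLaplacian_mulVec_eq_qmin_smul_iff] at heig ⊢
  refine le_antisymm ?_ (qmin_mul_sum_sq_le_signlessEnergy G _)
  rw [hnorm, ← heig]
  refine Finset.sum_le_sum fun e he => ?_
  induction e with | _ a b =>
  have hab : G.Adj a b := by simpa using he
  simp only [edgeSum_mk]
  obtain h | ha := hsign a b hab
  · calc (ε a * |X a| + ε b * |X b|) ^ 2 = ε a ^ 2 * (|X a| - |X b|) ^ 2 := by rw [h]; ring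
      _ = (|X a| - |-X b|) ^ 2 := by rw [hsq, one_mul, abs_neg]
      _ ≤ (X a - -X b) ^ 2 := sq_le_sq.2 (abs_abs_sub_abs_le _ _)
      _ = (X a + X b) ^ 2 := by rw [sub_neg_eq_add]
  · simp [ha, mul_pow, hsq]

lemma eq_zero_of_qmin_eigenvector_of_apply_eq_zero (hconn : G.Connected)
    (heig : signlessLaplacian G *ᵥ X = qmin G • X) (hε : ∀ v, |ε v| = 1)
    (hsign : ∀ a b, G.Adj a b → ε b = -ε a ∨ X a = 0) {u : V} (hu : X u = 0) : X = 0 := by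
  refine funext fun v => reachable_induction (P := fun v => X v = 0) (fun a b hab ha => ?_)
    (hconn u v) hu
  have hnbr : ∀ w ∈ G.neighborFinset a, ε a * |X a| + ε w * |X w| = -ε a * |X w| := fun w hw => by
    obtain h | h := hsign w a (by simpa [adj_comm] using hw)
    · simp [ha, h]
    · simp [ha, h]
  have hsum : -ε a * ∑ w ∈ G.neighborFinset a, |X w| = 0 := by
    have h := congrFun (signlessLaplacian_mulVec_mul_abs_eq heig hε hsign) a
    rw [signlessLaplacian_mulVec_apply, Finset.sum_congr rfl hnbr, ← Finset.mul_sum] at h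
    simpa [ha] using h
  have hεa : -ε a ≠ 0 := neg_ne_zero.2 (abs_pos.1 (hε a ▸ one_pos))
  have habs := (Finset.sum_eq_zero_iff_of_nonneg fun w _ => abs_nonneg (X w)).1
    ((mul_eq_zero_iff_left hεa).1 hsum)
  simpa using habs b (by simpa using hab)

end Sign

section Unicyclic

variable {V : Type*} {G : SimpleGraph V} {v : V} {c : G.Walk v v}

lemma ncard_edgeSet_deleteEdges_toSubgraph_add_ncard_verts [Finite V] (hc : c.IsCycle) :
    (G.deleteEdges c.toSubgraph.edgeSet).edgeSet.ncard + c.toSubgraph.verts.ncard =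
      G.edgeSet.ncard := by
  rw [edgeSet_deleteEdges, ncard_verts_toSubgraph hc, ← ncard_edgeSet_toSubgraph hc.isTrail,
    ncard_sdiff_add_ncard_of_subset c.toSubgraph.edgeSet_subset]

lemma exists_adj_mem_support_notMem_support [Fintype V] (hconn : G.Connected) (hc : c.IsCycle)
    (hlt : c.length < Fintype.card V) : ∃ u ∈ c.support, ∃ z ∉ c.support, G.Adj u z := by
  have huniv : c.toSubgraph.verts ≠ univ := fun h => by
    rw [← ncard_verts_toSubgraph hc, h, ncard_univ, Nat.card_eq_fintype_card] at hlt
    exact hlt.false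
  simpa only [c.mem_verts_toSubgraph] using
    exists_adj_mem_notMem hconn ⟨v, c.start_mem_verts_toSubgraph⟩ huniv

variable [Fintype V] {X : V → ℝ}

lemma apply_eq_zero_of_mem_support (hconn : G.Connected)
    (huni : G.edgeSet.ncard = Fintype.card V) (hc : c.IsCycle) (hq : 0 < qmin G)
    (heig : signlessLaplacian G *ᵥ X = qmin G • X)
    (hzero : ∀ u ∈ c.support, ∀ z, G.Adj u z → ¬ c.toSubgraph.Adj u z → X u = 0)
    {u z : V} (hu : u ∈ c.support) (hz : z ∉ c.support) (huz : G.Adj u z) {a : V}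
    (ha : a ∈ c.support) : X a = 0 := by
  set H := c.toSubgraph
  obtain ⟨σ, hσu, hverts, hedges⟩ := exists_perm_apply_eq_and_mapsTo_toSubgraph hc hu ha
  have henergy : signlessEnergy H.edgeSet (X ∘ σ) = signlessEnergy H.edgeSet X := by
    refine signlessEnergy_comp_of_mapsTo σ.injective (fun e he => ?_) X
    induction e with | _ a b => exact hedges a b he
  have hnorm : ∑ v ∈ H.verts.toFinset, (X ∘ σ) v ^ 2 = ∑ v ∈ H.verts.toFinset, X v ^ 2 :=
    sum_comp_eq_of_mapsTo (by rwa [coe_toFinset]) σ.injective.injOn fun v => X v ^ 2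
  have hle : signlessEnergy H.edgeSet (X ∘ σ) ≤
      qmin G * ∑ v ∈ H.verts.toFinset, (X ∘ σ) v ^ 2 := by
    rw [henergy, hnorm]
    exact signlessEnergy_edgeSet_le_qmin_mul_sum_sq heig (by simpa [H] using hzero)
  rw [← hσu]
  exact apply_eq_zero_of_signlessEnergy_edgeSet_le hq
    (exists_mem_verts_reachable_deleteEdges hconn ⟨v, c.start_mem_verts_toSubgraph⟩)
    ((ncard_edgeSet_deleteEdges_toSubgraph_add_ncard_verts hc).trans huni) hle
    (c.mem_verts_toSubgraph.2 hu) (by rwa [c.mem_verts_toSubgraph]) huz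

lemma eq_zero_of_forall_mem_support_eq_zero (hconn : G.Connected)
    (huni : G.edgeSet.ncard = Fintype.card V) (hc : c.IsCycle)
    (heig : signlessLaplacian G *ᵥ X = qmin G • X) (hcycle : ∀ a ∈ c.support, X a = 0) :
    X = 0 := by
  obtain ⟨e, he⟩ := List.exists_mem_of_ne_nil c.edges (by simpa using hc.not_nil)
  have htree : (G.deleteEdges {e}).IsTree :=
    isTree_deleteEdges_of_mem_edges hconn (by rw [huni, Nat.card_eq_fintype_card]) hc he
  obtain ⟨ε, hε, hsign⟩ := exists_abs_eq_one_of_isBipartite htree.isBipartite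
  refine eq_zero_of_qmin_eigenvector_of_apply_eq_zero hconn heig hε (fun a b hab => ?_)
    (hcycle v c.start_mem_support)
  by_cases habe : s(a, b) = e
  · exact .inr (hcycle a (c.fst_mem_support_of_mem_edges (habe ▸ he)))
  · exact .inl (hsign a b (deleteEdges_adj.2 ⟨hab, habe⟩))

theorem exists_cycle_vertex_nonzero_of_qmin_eigenvector_general (hconn : G.Connected)
    (huni : G.edgeSet.ncard = Fintype.card V) (hc : c.IsCycle) (hlt : c.length < Fintype.card V)
    (hX : X ≠ 0) (heig : signlessLaplacian G *ᵥ X = qmin G • X) :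
    ∃ u ∈ c.support, 3 ≤ G.degree u ∧ X u ≠ 0 := by
  by_contra! hdeg
  have hzero : ∀ u ∈ c.support, ∀ z, G.Adj u z → ¬ c.toSubgraph.Adj u z → X u = 0 :=
    fun u hu z huz hz => hdeg u hu (three_le_degree_of_not_adj_toSubgraph hc hu huz hz)
  obtain ⟨u, hu, z, hz, huz⟩ := exists_adj_mem_support_notMem_support hconn hc hlt
  have huX : X u = 0 := hzero u hu z huz fun h => hz (c.mem_verts_toSubgraph.1 h.snd_mem)
  have hq : 0 < qmin G := qmin_pos_of_apply_eq_zero hconn hX heig huX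
  have hcycle : ∀ a ∈ c.support, X a = 0 := fun a ha =>
    apply_eq_zero_of_mem_support hconn huni hc hq heig hzero hu hz huz ha
  exact hX (eq_zero_of_forall_mem_support_eq_zero hconn huni hc heig hcycle)

end Unicyclic

/-- In a connected nonbipartite unicyclic graph whose (unique, odd) cycle has length
`k < n`, every eigenvector for the least `Q`-eigenvalue is nonzero at some vertex of
the cycle of degree at least `3`. -/
theorem exists_cycle_vertex_nonzero_of_qmin_eigenvector
    {V : Type*} [Fintype V] (n : ℕ) (G : SimpleGraph V) (hcard : Fintype.card V = n)
    (hconn : G.Connected) (huni : G.edgeSet.ncard = n)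
    (v : V) (c : G.Walk v v) (hc : c.IsCycle) (hodd : Odd c.length) (hlt : c.length < n)
    (X : V → ℝ) (hX : X ≠ 0)
    (heig : (signlessLaplacian G).mulVec X = qmin G • X) :
    ∃ u ∈ c.support, 3 ≤ G.degree u ∧ X u ≠ 0 := by
  subst hcard
  exact exists_cycle_vertex_nonzero_of_qmin_eigenvector_general hconn huni hc hlt hX heig
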